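/- Let n ≥ 1, let U ⊆ ℝⁿ be open, and let V = (V^i) : U → ℝⁿ and w = (w^i_k) : U → Matₙ(ℝ) be smooth, with V^i_j := ∂V^i/∂u^j, V^i_{jk} := ∂²V^i/∂u^j∂u^k, w^i_{k,l} := ∂w^i_k/∂u^l. Assume the commuting-flow conditions hold on U: (a) −Σ_k w^i_{h,k}V^k_m − Σ_k w^i_{m,k}V^k_h − 2Σ_k w^i_k V^k_{mh} + Σ_k V^i_k w^k_{m,h} + Σ_k V^i_k w^k_{h,m} = 0 for all i,h,m; (b) −Σ_k w^i_k V^k_h + Σ_k V^i_k w^k_h = 0 for all i,h. Let Ω ⊆ ℝ² be open with coordinates (x,t) and let b : Ω → ℝⁿ, p : Ω → ℝⁿ be smooth with b_x taking values in U, satisfying the adjoint (cotangent) system: b^i_t = V^i(b_x) and p_{k,t} = Σ_{i,h} V^i_{kh}(b_x) b^h_{xx} p_i + Σ_i V^i_k(b_x) p_{i,x}. Then the conservation law ∂_t[Σ_{i,k} w^i_k(b_x) b^k_{xx} p_i] = ∂_x[Σ_{i,j,k} V^i_j(b_x) w^j_k(b_x) b^k_{xx} p_i] holds on Ω. -/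

import Mathlib

/-- Partial derivative with respect to the first coordinate `x` of `ℝ × ℝ`. -/
noncomputable def pdx (f : ℝ × ℝ → ℝ) (p : ℝ × ℝ) : ℝ := fderiv ℝ f p (1, 0)

/-- Partial derivative with respect to the second coordinate `t` of `ℝ × ℝ`. -/
noncomputable def pdt (f : ℝ × ℝ → ℝ) (p : ℝ × ℝ) : ℝ := fderiv ℝ f p (0, 1)

/-- Partial derivative in direction `k` for functions on `ℝⁿ`. -/
noncomputable def pd {n : ℕ} (k : Fin n) (f : (Fin n → ℝ) → ℝ) (x : Fin n → ℝ) : ℝ :=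
  fderiv ℝ f x (Pi.single k 1)

/-- First `x`-derivative `b_x` of a curve of potential coordinates. -/
noncomputable def bX {n : ℕ} (b : ℝ × ℝ → (Fin n → ℝ)) (z : ℝ × ℝ) : Fin n → ℝ :=
  fun i => pdx (fun s => b s i) z

/-- Second `x`-derivative `b^k_{xx}`. -/
noncomputable def bXX {n : ℕ} (b : ℝ × ℝ → (Fin n → ℝ)) (k : Fin n) (z : ℝ × ℝ) : ℝ :=
  pdx (pdx (fun s => b s k)) z

/-!
Put `u = b_x`, let `A(u)` be the Jacobian of `V` and `W = w(u) u_x`. The system becomes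
`u_t = A(u) u_x`, and the equation for `p` is `p_t = (Aᵀ p)_x`. Conditions (b) and (a) are the
vanishing of the parts of `W_t - A W_x` which are linear in `u_xx` and quadratic in `u_x`, so
`W_t = A W_x`. Hence `(W · p)_t = A W_x · p + W · (Aᵀ p)_x = (W · Aᵀ p)_x = (A W · p)_x`.
-/

open scoped Matrix Topology

section DirectionalDerivatives

variable {𝕜 E F ι : Type*} [NontriviallyNormedField 𝕜] [NormedAddCommGroup E] [NormedSpace 𝕜 E]
  [NormedAddCommGroup F] [NormedSpace 𝕜 F] {z : E}

theorem differentiableAt_fderiv {f : E → F} (hf : ContDiffAt 𝕜 2 f z) :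
    DifferentiableAt 𝕜 (fderiv 𝕜 f) z :=
  (hf.fderiv_right (m := 1) (by norm_num)).differentiableAt one_ne_zero

theorem fderiv_apply_apply {f : E → ι → 𝕜} (hf : DifferentiableAt 𝕜 f z) (v : E) (i : ι) :
    fderiv 𝕜 (fun s => f s i) z v = fderiv 𝕜 f z v i := by
  rw [fderiv_apply hf i]
  rfl

variable [Fintype ι]

theorem differentiableAt_dotProduct {f g : E → ι → 𝕜} (hf : DifferentiableAt 𝕜 f z)
    (hg : DifferentiableAt 𝕜 g z) : DifferentiableAt 𝕜 (fun s => f s ⬝ᵥ g s) z :=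
  DifferentiableAt.fun_sum fun i _ =>
    (differentiableAt_pi.1 hf i).fun_mul (differentiableAt_pi.1 hg i)

theorem fderiv_dotProduct {f g : E → ι → 𝕜} (hf : DifferentiableAt 𝕜 f z)
    (hg : DifferentiableAt 𝕜 g z) (v : E) :
    fderiv 𝕜 (fun s => f s ⬝ᵥ g s) z v
      = fderiv 𝕜 f z v ⬝ᵥ g z + f z ⬝ᵥ fderiv 𝕜 g z v := by
  have hfi := differentiableAt_pi.1 hf
  have hgi := differentiableAt_pi.1 hg
  simp only [dotProduct]
  rw [fderiv_fun_sum fun i _ => (hfi i).fun_mul (hgi i), sum_apply,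
    ← Finset.sum_add_distrib]
  refine Finset.sum_congr rfl fun i _ => ?_
  rw [fderiv_fun_mul (hfi i) (hgi i), ← fderiv_apply_apply hf, ← fderiv_apply_apply hg]
  simp only [add_apply, smul_apply, smul_eq_mul]
  ring

theorem fderiv_fderiv_apply_comm {f : E → F} (hf : ContDiffAt 𝕜 (minSmoothness 𝕜 2) f z)
    (v v' : E) :
    fderiv 𝕜 (fun s => fderiv 𝕜 f s v) z v' = fderiv 𝕜 (fun s => fderiv 𝕜 f s v') z v := by
  have hd : DifferentiableAt 𝕜 (fderiv 𝕜 f) z :=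
    differentiableAt_fderiv (hf.of_le le_minSmoothness)
  rw [fderiv_clm_apply hd (differentiableAt_const v),
    fderiv_clm_apply hd (differentiableAt_const v')]
  simpa using (hf.isSymmSndFDerivAt le_rfl).eq v' v

theorem fderiv_dotProduct_eq_of_adjoint {W P : E → ι → 𝕜} {A : E → Matrix ι ι 𝕜} {ξ τ : E}
    (hW : DifferentiableAt 𝕜 W z) (hP : DifferentiableAt 𝕜 P z)
    (hAP : DifferentiableAt 𝕜 (fun s => (A s)ᵀ *ᵥ P s) z)
    (hWτ : fderiv 𝕜 W z τ = A z *ᵥ fderiv 𝕜 W z ξ)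
    (hPτ : fderiv 𝕜 P z τ = fderiv 𝕜 (fun s => (A s)ᵀ *ᵥ P s) z ξ) :
    fderiv 𝕜 (fun s => W s ⬝ᵥ P s) z τ = fderiv 𝕜 (fun s => (A s *ᵥ W s) ⬝ᵥ P s) z ξ := by
  have hadjoint (M : Matrix ι ι 𝕜) (x y : ι → 𝕜) : (M *ᵥ x) ⬝ᵥ y = x ⬝ᵥ (Mᵀ *ᵥ y) := by
    rw [Matrix.dotProduct_transpose_mulVec, dotProduct_comm]
  simp only [hadjoint]
  rw [fderiv_dotProduct hW hP, fderiv_dotProduct hW hAP, hWτ, hPτ, hadjoint]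

end DirectionalDerivatives

section MatrixFields

variable {n : ℕ} {ι κ : Type*}

/-- The matrix `w^i_k(u)` of values at `u` of a family of functions `w^i_k`. -/
def matrixAt (w : ι → κ → (Fin n → ℝ) → ℝ) (u : Fin n → ℝ) : Matrix ι κ ℝ :=
  Matrix.of fun i k => w i k u

/-- The Jacobian matrix `∂V^i/∂u^j` at `u`. It is built from the entries `pd j (V i)`, so no
differentiability is required. The Jacobian of the gradient `fun m => pd m f` is the Hessian
of `f`. -/
noncomputable def jacobian (V : ι → (Fin n → ℝ) → ℝ) : (Fin n → ℝ) → Matrix ι (Fin n) ℝ :=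
  matrixAt fun i j => pd j (V i)

variable {E : Type*} [NormedAddCommGroup E] [NormedSpace ℝ E] {u : E → Fin n → ℝ} {z : E}

theorem fderiv_eq_pd_dotProduct (f : (Fin n → ℝ) → ℝ) (x v : Fin n → ℝ) :
    fderiv ℝ f x v = (fun j => pd j f x) ⬝ᵥ v := by
  conv_lhs => rw [pi_eq_sum_univ' v, map_sum]
  simp only [map_smul, smul_eq_mul]
  exact Finset.sum_congr rfl fun j _ => mul_comm _ _

theorem fderiv_comp_eq_jacobian_mulVec {V : ι → (Fin n → ℝ) → ℝ}
    (hV : ∀ i, DifferentiableAt ℝ (V i) (u z)) (hu : DifferentiableAt ℝ u z) (v : E) :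
    fderiv ℝ (fun s i => V i (u s)) z v = jacobian V (u z) *ᵥ fderiv ℝ u z v := by
  have hVu : DifferentiableAt ℝ (fun s i => V i (u s)) z :=
    differentiableAt_pi.2 fun i => (hV i).comp z hu
  ext i
  rw [← fderiv_apply_apply hVu]
  exact (congrArg (· v) (fderiv_comp z (hV i) hu)).trans (fderiv_eq_pd_dotProduct _ _ _)

variable [Fintype κ] {w : ι → κ → (Fin n → ℝ) → ℝ} {y : E → κ → ℝ}

theorem differentiableAt_matrixAt_mulVec (hw : ∀ i k, DifferentiableAt ℝ (w i k) (u z))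
    (hu : DifferentiableAt ℝ u z) (hy : DifferentiableAt ℝ y z) :
    DifferentiableAt ℝ (fun s => matrixAt w (u s) *ᵥ y s) z :=
  differentiableAt_pi.2 fun i =>
    differentiableAt_dotProduct (differentiableAt_pi.2 fun k => (hw i k).comp z hu) hy

theorem fderiv_matrixAt_mulVec (hw : ∀ i k, DifferentiableAt ℝ (w i k) (u z))
    (hu : DifferentiableAt ℝ u z) (hy : DifferentiableAt ℝ y z) (v : E) :
    fderiv ℝ (fun s => matrixAt w (u s) *ᵥ y s) z v
      = (fun i => (jacobian (w i) (u z) *ᵥ fderiv ℝ u z v) ⬝ᵥ y z)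
        + matrixAt w (u z) *ᵥ fderiv ℝ y z v := by
  have hwy := differentiableAt_matrixAt_mulVec hw hu hy
  ext i
  have hwi : DifferentiableAt ℝ (fun s k => w i k (u s)) z :=
    differentiableAt_pi.2 fun k => (hw i k).comp z hu
  have hdot := fderiv_dotProduct hwi hy v
  rw [Pi.add_apply, ← fderiv_comp_eq_jacobian_mulVec (hw i) hu, ← fderiv_apply_apply hwy]
  exact hdot

end MatrixFields

/-- The conditions at the point `u` for `w^i_k(b_x) b^k_{xx}` to be a symmetry of `b_t = V(b_x)`:
`commute` is condition (b) of the theorem and `quadratic` is condition (a). -/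
structure IsHydrodynamicSymmetryAt {n : ℕ} (V : Fin n → (Fin n → ℝ) → ℝ)
    (w : Fin n → Fin n → (Fin n → ℝ) → ℝ) (u : Fin n → ℝ) : Prop where
  quadratic : ∀ i h m : Fin n,
    -(∑ k, pd k (w i h) u * pd m (V k) u)
      - ∑ k, pd k (w i m) u * pd h (V k) u
      - 2 * ∑ k, w i k u * pd h (fun y => pd m (V k) y) u
      + ∑ k, pd k (V i) u * pd h (w k m) u
      + ∑ k, pd k (V i) u * pd m (w k h) u = 0
  commute : ∀ i h : Fin n, -(∑ k, w i k u * pd h (V k) u) + ∑ k, pd k (V i) u * w k h u = 0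

namespace IsHydrodynamicSymmetryAt

variable {n : ℕ} {V : Fin n → (Fin n → ℝ) → ℝ} {w : Fin n → Fin n → (Fin n → ℝ) → ℝ}

theorem matrixAt_mul_jacobian {u : Fin n → ℝ} (h : IsHydrodynamicSymmetryAt V w u) :
    matrixAt w u * jacobian V u = jacobian V u * matrixAt w u := by
  ext i j
  exact neg_add_eq_zero.1 (h.commute i j)

theorem symmetrized_matrix_eq_zero {u : Fin n → ℝ} (h : IsHydrodynamicSymmetryAt V w u)
    (i : Fin n) :
    -(jacobian (w i) u * jacobian V u) - (jacobian (w i) u * jacobian V u)ᵀ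
      - (2 : ℝ) • ∑ k, w i k u • (jacobian (fun m => pd m (V k)) u)ᵀ
      + ∑ k, jacobian V u i k • (jacobian (w k) u)ᵀ
      + ∑ k, jacobian V u i k • jacobian (w k) u = 0 := by
  ext l m
  simpa [Matrix.mul_apply, Matrix.sum_apply, jacobian, matrixAt, mul_comm] using h.quadratic i l m

-- A matrix and its transpose have the same quadratic form, so symmetrization only doubles it.
theorem quadraticForm_eq {u : Fin n → ℝ} (h : IsHydrodynamicSymmetryAt V w u) (v : Fin n → ℝ) :
    (fun i => (jacobian (w i) u *ᵥ (jacobian V u *ᵥ v)) ⬝ᵥ v)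
        + matrixAt w u *ᵥ (fun k => (jacobian (fun m => pd m (V k)) u *ᵥ v) ⬝ᵥ v)
      = jacobian V u *ᵥ fun k => (jacobian (w k) u *ᵥ v) ⬝ᵥ v := by
  have htranspose (M : Matrix (Fin n) (Fin n) ℝ) : (Mᵀ *ᵥ v) ⬝ᵥ v = (M *ᵥ v) ⬝ᵥ v := by
    rw [dotProduct_comm, Matrix.dotProduct_transpose_mulVec, dotProduct_comm]
  ext i
  have hform := congrArg (fun M => (M *ᵥ v) ⬝ᵥ v) (h.symmetrized_matrix_eq_zero i)
  simp only [Matrix.add_mulVec, Matrix.sub_mulVec, Matrix.neg_mulVec, Matrix.smul_mulVec,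
    Matrix.sum_mulVec, Matrix.zero_mulVec, add_dotProduct, sub_dotProduct, neg_dotProduct,
    smul_dotProduct, sum_dotProduct, zero_dotProduct, htranspose, smul_eq_mul,
    ← Matrix.mulVec_mulVec] at hform
  change _ + ∑ k, w i k u * _ = ∑ k, jacobian V u i k * _
  linarith

variable {E : Type*} [NormedAddCommGroup E] [NormedSpace ℝ E] {u : E → Fin n → ℝ} {z ξ τ : E}

theorem fderiv_flow_eq (h : IsHydrodynamicSymmetryAt V w (u z))
    (hV : ∀ k m, DifferentiableAt ℝ (pd m (V k)) (u z))
    (hw : ∀ i k, DifferentiableAt ℝ (w i k) (u z)) (hu : ContDiffAt ℝ 2 u z)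
    (huτ : ∀ᶠ s in 𝓝 z, fderiv ℝ u s τ = jacobian V (u s) *ᵥ fderiv ℝ u s ξ) :
    fderiv ℝ (fun s => matrixAt w (u s) *ᵥ fderiv ℝ u s ξ) z τ
      = jacobian V (u z) *ᵥ fderiv ℝ (fun s => matrixAt w (u s) *ᵥ fderiv ℝ u s ξ) z ξ := by
  have hdu : DifferentiableAt ℝ u z := hu.differentiableAt two_ne_zero
  have hduξ : DifferentiableAt ℝ (fun s => fderiv ℝ u s ξ) z :=
    (differentiableAt_fderiv hu).clm_apply (differentiableAt_const ξ)
  have huξτ : fderiv ℝ (fun s => fderiv ℝ u s ξ) z τ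
      = (fun k => (jacobian (fun m => pd m (V k)) (u z) *ᵥ fderiv ℝ u z ξ) ⬝ᵥ fderiv ℝ u z ξ)
        + jacobian V (u z) *ᵥ fderiv ℝ (fun s => fderiv ℝ u s ξ) z ξ := by
    rw [fderiv_fderiv_apply_comm (by simpa using hu), Filter.EventuallyEq.fderiv_eq huτ]
    exact fderiv_matrixAt_mulVec hV hdu hduξ ξ
  rw [fderiv_matrixAt_mulVec hw hdu hduξ, fderiv_matrixAt_mulVec hw hdu hduξ,
    Filter.Eventually.self_of_nhds huτ, huξτ, Matrix.mulVec_add, Matrix.mulVec_add, ← add_assoc,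
    h.quadraticForm_eq, Matrix.mulVec_mulVec, Matrix.mulVec_mulVec, h.matrixAt_mul_jacobian]

theorem fderiv_flow_dotProduct_eq (h : IsHydrodynamicSymmetryAt V w (u z))
    (hV : ∀ k m, DifferentiableAt ℝ (pd m (V k)) (u z))
    (hw : ∀ i k, DifferentiableAt ℝ (w i k) (u z)) (hu : ContDiffAt ℝ 2 u z)
    (huτ : ∀ᶠ s in 𝓝 z, fderiv ℝ u s τ = jacobian V (u s) *ᵥ fderiv ℝ u s ξ)
    {p : E → Fin n → ℝ} (hp : DifferentiableAt ℝ p z)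
    (hpτ : fderiv ℝ p z τ = fderiv ℝ (fun s => (jacobian V (u s))ᵀ *ᵥ p s) z ξ) :
    fderiv ℝ (fun s => (matrixAt w (u s) *ᵥ fderiv ℝ u s ξ) ⬝ᵥ p s) z τ
      = fderiv ℝ
          (fun s => (jacobian V (u s) *ᵥ matrixAt w (u s) *ᵥ fderiv ℝ u s ξ) ⬝ᵥ p s) z ξ :=
  have hdu : DifferentiableAt ℝ u z := hu.differentiableAt two_ne_zero
  have hduξ : DifferentiableAt ℝ (fun s => fderiv ℝ u s ξ) z :=
    (differentiableAt_fderiv hu).clm_apply (differentiableAt_const ξ)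
  fderiv_dotProduct_eq_of_adjoint (differentiableAt_matrixAt_mulVec hw hdu hduξ) hp
    (differentiableAt_matrixAt_mulVec (fun k i => hV i k) hdu hp)
    (h.fderiv_flow_eq hV hw hu huτ) hpτ

end IsHydrodynamicSymmetryAt

section MatrixSums

variable {ι κ μ R : Type*} [Fintype ι] [Fintype κ] [Fintype μ] [NonUnitalSemiring R]

theorem mulVec_dotProduct_eq_sum (M : Matrix ι κ R) (x : κ → R) (y : ι → R) :
    (M *ᵥ x) ⬝ᵥ y = ∑ i, ∑ k, M i k * x k * y i := by
  simp only [Matrix.mulVec, dotProduct, Finset.sum_mul]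

theorem mulVec_mulVec_dotProduct_eq_sum (M : Matrix ι κ R) (N : Matrix κ μ R) (x : μ → R)
    (y : ι → R) :
    (M *ᵥ N *ᵥ x) ⬝ᵥ y = ∑ i, ∑ j, ∑ k, M i j * N j k * x k * y i := by
  simp only [Matrix.mulVec, dotProduct, Finset.mul_sum, Finset.sum_mul, mul_assoc]

end MatrixSums

section PotentialCoordinates

variable {n : ℕ} {b p : ℝ × ℝ → Fin n → ℝ} {V : Fin n → (Fin n → ℝ) → ℝ} {z : ℝ × ℝ}

theorem bX_eq_fderiv (hb : DifferentiableAt ℝ b z) : bX b z = fderiv ℝ b z (1, 0) :=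
  funext fun i => fderiv_apply_apply hb (1, 0) i

theorem bXX_eq_fderiv (hu : DifferentiableAt ℝ (bX b) z) (k : Fin n) :
    bXX b k z = fderiv ℝ (bX b) z (1, 0) k :=
  fderiv_apply_apply hu (1, 0) k

theorem contDiffOn_bX {Ω : Set (ℝ × ℝ)} (hΩ : IsOpen Ω) {r q : WithTop ℕ∞}
    (hb : ContDiffOn ℝ r b Ω) (hq : q + 1 ≤ r) : ContDiffOn ℝ q (bX b) Ω :=
  have hdb : DifferentiableOn ℝ b Ω :=
    hb.differentiableOn (by rintro rfl; simp at hq)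
  ((hb.fderiv_of_isOpen hΩ hq).clm_apply contDiffOn_const).congr fun _ hz =>
    bX_eq_fderiv (hdb.differentiableAt (hΩ.mem_nhds hz))

theorem fderiv_bX_eq_jacobian_mulVec (hb : ContDiffAt ℝ 2 b z)
    (hV : ∀ i, DifferentiableAt ℝ (V i) (bX b z))
    (heq : ∀ᶠ s in 𝓝 z, ∀ i, pdt (fun r => b r i) s = V i (bX b s)) :
    fderiv ℝ (bX b) z (0, 1) = jacobian V (bX b z) *ᵥ fderiv ℝ (bX b) z (1, 0) := by
  have hdb : ∀ᶠ s in 𝓝 z, DifferentiableAt ℝ b s :=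
    (hb.eventually (by simp)).mono fun s hs => hs.differentiableAt two_ne_zero
  have hbx : bX b =ᶠ[𝓝 z] fun s => fderiv ℝ b s (1, 0) := hdb.mono fun s hs => bX_eq_fderiv hs
  have hu : DifferentiableAt ℝ (bX b) z :=
    ((differentiableAt_fderiv hb).clm_apply (differentiableAt_const _)).congr_of_eventuallyEq hbx
  have hbt : (fun s => fderiv ℝ b s (0, 1)) =ᶠ[𝓝 z] fun s i => V i (bX b s) := by
    filter_upwards [hdb, heq] with s hs hst
    exact funext fun i => (fderiv_apply_apply hs (0, 1) i).symm.trans (hst i)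
  calc fderiv ℝ (bX b) z (0, 1)
      = fderiv ℝ (fun s => fderiv ℝ b s (1, 0)) z (0, 1) := by rw [hbx.fderiv_eq]
    _ = fderiv ℝ (fun s => fderiv ℝ b s (0, 1)) z (1, 0) :=
        fderiv_fderiv_apply_comm (by simpa using hb) _ _
    _ = fderiv ℝ (fun s i => V i (bX b s)) z (1, 0) := by rw [hbt.fderiv_eq]
    _ = jacobian V (bX b z) *ᵥ fderiv ℝ (bX b) z (1, 0) :=
        fderiv_comp_eq_jacobian_mulVec hV hu _

theorem fderiv_eq_fderiv_jacobian_transpose_mulVec (hu : DifferentiableAt ℝ (bX b) z)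
    (hp : DifferentiableAt ℝ p z) (hV : ∀ i k, DifferentiableAt ℝ (pd k (V i)) (bX b z))
    (hadj : ∀ k : Fin n,
      pdt (fun s => p s k) z
        = ∑ i, ∑ h, pd h (fun y => pd k (V i) y) (bX b z) * bXX b h z * p z i
          + ∑ i, pd k (V i) (bX b z) * pdx (fun s => p s i) z) :
    fderiv ℝ p z (0, 1) = fderiv ℝ (fun s => (jacobian V (bX b s))ᵀ *ᵥ p s) z (1, 0) := by
  have hflux := fderiv_matrixAt_mulVec (w := fun k i => pd k (V i)) (fun k i => hV i k) hu hp (1, 0)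
  refine Eq.trans (funext fun k => ?_) hflux.symm
  rw [← fderiv_apply_apply hp, Pi.add_apply, mulVec_dotProduct_eq_sum]
  simp only [← bXX_eq_fderiv hu]
  refine (hadj k).trans (congrArg _ (Finset.sum_congr rfl fun i _ => ?_))
  exact congrArg _ (fderiv_apply_apply hp (1, 0) i)

end PotentialCoordinates

theorem statement12_general (n : ℕ) (U : Set (Fin n → ℝ)) (hU : IsOpen U)
    (V : Fin n → (Fin n → ℝ) → ℝ) (hV : ∀ i, ContDiffOn ℝ 2 (V i) U)
    (w : Fin n → Fin n → (Fin n → ℝ) → ℝ) (hw : ∀ i k, DifferentiableOn ℝ (w i k) U)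
    (hsymm : ∀ x ∈ U, IsHydrodynamicSymmetryAt V w x)
    (Ω : Set (ℝ × ℝ)) (hΩ : IsOpen Ω)
    (b p : ℝ × ℝ → (Fin n → ℝ))
    (hb : ContDiffOn ℝ 3 b Ω) (hp : DifferentiableOn ℝ p Ω)
    (hbU : ∀ z ∈ Ω, bX b z ∈ U)
    (heq : ∀ z ∈ Ω, ∀ i : Fin n, pdt (fun s => b s i) z = V i (bX b z))
    (hadj : ∀ z ∈ Ω, ∀ k : Fin n,
      pdt (fun s => p s k) z
        = ∑ i, ∑ h, pd h (fun y => pd k (V i) y) (bX b z) * bXX b h z * p z i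
          + ∑ i, pd k (V i) (bX b z) * pdx (fun s => p s i) z) :
    ∀ z ∈ Ω,
      pdt (fun s => ∑ i, ∑ k, w i k (bX b s) * bXX b k s * p s i) z
        = pdx (fun s => ∑ i, ∑ j, ∑ k,
            pd j (V i) (bX b s) * w j k (bX b s) * bXX b k s * p s i) z := by
  intro z hz
  have hu : ContDiffOn ℝ 2 (bX b) Ω := contDiffOn_bX hΩ hb (by norm_num)
  have hdu {s} (hs : s ∈ Ω) : DifferentiableAt ℝ (bX b) s :=
    (hu.differentiableOn two_ne_zero).differentiableAt (hΩ.mem_nhds hs)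
  have hVat {x} (hx : x ∈ U) (i) : ContDiffAt ℝ 2 (V i) x := (hV i).contDiffAt (hU.mem_nhds hx)
  have hdV (i k) : DifferentiableAt ℝ (pd k (V i)) (bX b z) :=
    (differentiableAt_fderiv (hVat (hbU z hz) i)).clm_apply (differentiableAt_const _)
  have hdw (i k) : DifferentiableAt ℝ (w i k) (bX b z) :=
    (hw i k).differentiableAt (hU.mem_nhds (hbU z hz))
  have hdp : DifferentiableAt ℝ p z := hp.differentiableAt (hΩ.mem_nhds hz)
  have hut {s} (hs : s ∈ Ω) :
      fderiv ℝ (bX b) s (0, 1) = jacobian V (bX b s) *ᵥ fderiv ℝ (bX b) s (1, 0) :=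
    fderiv_bX_eq_jacobian_mulVec ((hb.contDiffAt (hΩ.mem_nhds hs)).of_le (by norm_num))
      (fun i => (hVat (hbU s hs) i).differentiableAt two_ne_zero)
      (Filter.eventually_of_mem (hΩ.mem_nhds hs) heq)
  have hlaw := (hsymm _ (hbU z hz)).fderiv_flow_dotProduct_eq hdV hdw
    (hu.contDiffAt (hΩ.mem_nhds hz)) (Filter.eventually_of_mem (hΩ.mem_nhds hz) fun s => hut) hdp
    (fderiv_eq_fderiv_jacobian_transpose_mulVec (hdu hz) hdp hdV (hadj z hz))
  have hdensity {s} (hs : s ∈ Ω) : ∑ i, ∑ k, w i k (bX b s) * bXX b k s * p s i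
      = (matrixAt w (bX b s) *ᵥ fderiv ℝ (bX b) s (1, 0)) ⬝ᵥ p s := by
    simp only [bXX_eq_fderiv (hdu hs)]
    exact (mulVec_dotProduct_eq_sum _ _ _).symm
  have hflux {s} (hs : s ∈ Ω) :
      ∑ i, ∑ j, ∑ k, pd j (V i) (bX b s) * w j k (bX b s) * bXX b k s * p s i
        = (jacobian V (bX b s) *ᵥ matrixAt w (bX b s) *ᵥ fderiv ℝ (bX b) s (1, 0)) ⬝ᵥ p s := by
    simp only [bXX_eq_fderiv (hdu hs)]
    exact (mulVec_mulVec_dotProduct_eq_sum _ _ _ _).symm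
  rw [pdt, pdx, (Filter.eventuallyEq_of_mem (hΩ.mem_nhds hz) fun s => hdensity).fderiv_eq,
    (Filter.eventuallyEq_of_mem (hΩ.mem_nhds hz) fun s => hflux).fderiv_eq, hlaw]

/-- if `w^i_k(u)` is a hydrodynamic-type symmetry of `b_t = V(b_x)`
(conditions (a) and (b)), then on any solution `(b, p)` of the adjoint (cotangent)
system the conservation law
`∂_t[w^i_k(b_x) b^k_{xx} p_i] = ∂_x[V^i_j(b_x) w^j_k(b_x) b^k_{xx} p_i]` holds. -/
theorem statement12 (n : ℕ) (hn : 1 ≤ n) (U : Set (Fin n → ℝ)) (hU : IsOpen U)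
    (V : Fin n → (Fin n → ℝ) → ℝ) (hV : ∀ i, ContDiffOn ℝ (⊤ : ℕ∞) (V i) U)
    (w : Fin n → Fin n → (Fin n → ℝ) → ℝ) (hw : ∀ i k, ContDiffOn ℝ (⊤ : ℕ∞) (w i k) U)
    (hcommA : ∀ x ∈ U, ∀ i h m : Fin n,
      -(∑ k, pd k (w i h) x * pd m (V k) x)
        - ∑ k, pd k (w i m) x * pd h (V k) x
        - 2 * ∑ k, w i k x * pd h (fun y => pd m (V k) y) x
        + ∑ k, pd k (V i) x * pd h (w k m) x
        + ∑ k, pd k (V i) x * pd m (w k h) x = 0)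
    (hcommB : ∀ x ∈ U, ∀ i h : Fin n,
      -(∑ k, w i k x * pd h (V k) x) + ∑ k, pd k (V i) x * w k h x = 0)
    (Ω : Set (ℝ × ℝ)) (hΩ : IsOpen Ω)
    (b p : ℝ × ℝ → (Fin n → ℝ))
    (hb : ContDiffOn ℝ (⊤ : ℕ∞) b Ω) (hp : ContDiffOn ℝ (⊤ : ℕ∞) p Ω)
    (hbU : ∀ z ∈ Ω, bX b z ∈ U)
    (heq : ∀ z ∈ Ω, ∀ i : Fin n, pdt (fun s => b s i) z = V i (bX b z))
    (hadj : ∀ z ∈ Ω, ∀ k : Fin n,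
      pdt (fun s => p s k) z
        = ∑ i, ∑ h, pd h (fun y => pd k (V i) y) (bX b z) * bXX b h z * p z i
          + ∑ i, pd k (V i) (bX b z) * pdx (fun s => p s i) z) :
    ∀ z ∈ Ω,
      pdt (fun s => ∑ i, ∑ k, w i k (bX b s) * bXX b k s * p s i) z
        = pdx (fun s => ∑ i, ∑ j, ∑ k,
            pd j (V i) (bX b s) * w j k (bX b s) * bXX b k s * p s i) z := by
  exact statement12_general n U hU V (fun i => contDiffOn_infty.1 (hV i) 2) w
    (fun i k => (hw i k).differentiableOn (by simp)) (fun x hx => ⟨hcommA x hx, hcommB x hx⟩) Ω hΩ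
    b p (contDiffOn_infty.1 hb 3) (hp.differentiableOn (by simp)) hbU heq hadj
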